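/- $b$-testing for the Cauchy integral along a Lipschitz graph: Let $A : \mathbb{R} \to \mathbb{R}$ be Lipschitz and differentiable, let $b(x) = 1 + iA'(x)$, and let $I = [\alpha,\beta]$ be a compact interval. Then for every $x$ in the open interval $(\alpha,\beta)$, the principal value $$C_A(\mathbf{1}_I b)(x) = \lim_{\varepsilon\to 0^+} \int_{I\setminus(x-\varepsilon,x+\varepsilon)} \frac{1 + iA'(y)}{x - y + i(A(x) - A(y))}\,dy$$ exists and equals $$\operatorname{Log}\left(\frac{x - \alpha + i(A(x) - A(\alpha))}{\beta - x + i(A(\beta) - A(x))}\right),$$ where $\operatorname{Log}$ is the principal branch of the complex logarithm, and moreover $\int_\alpha^\beta |C_A(\mathbf{1}_I b)(x)|^2\,dx \le C(\beta - \alpha)$, where $C$ depends only on the Lipschitz constant of $A$. -/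

import Mathlib

open MeasureTheory Set Filter Topology
open scoped NNReal

noncomputable section

/-- The kernel `K_A(x,y) = 1 / (x - y + i (A x - A y))` of the Cauchy integral along the graph
`{x + i A x : x ∈ ℝ}`. -/
def cauchyKernel (A : ℝ → ℝ) (x y : ℝ) : ℂ :=
  1 / (((x - y : ℝ) : ℂ) + Complex.I * ((A x - A y : ℝ) : ℂ))

/-- The function `b(y) = 1 + i A'(y)`. -/
def graphDensity (A : ℝ → ℝ) (y : ℝ) : ℂ :=
  1 + Complex.I * ((deriv A y : ℝ) : ℂ)

/-- The truncated Cauchy integral `∫_{ℝ ∖ (x-ε, x+ε)} K_A(x,y) f(y) dy`. -/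
def truncatedCauchy (A : ℝ → ℝ) (ε : ℝ) (f : ℝ → ℂ) (x : ℝ) : ℂ :=
  ∫ y in (Ioo (x - ε) (x + ε))ᶜ, cauchyKernel A x y * f y

/-- The Cauchy integral `C_A f (x)`, as the principal value
`lim_{ε → 0⁺} ∫_{ℝ ∖ (x-ε, x+ε)} K_A(x,y) f(y) dy` (an arbitrary value if there is no limit). -/
def cauchyIntegral (A : ℝ → ℝ) (f : ℝ → ℂ) (x : ℝ) : ℂ :=
  limUnder (𝓝[>] (0 : ℝ)) (fun ε => truncatedCauchy A ε f x)

end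

/-- The chord `F x - F y` of the graph parametrization `F t = t + i A t`. -/
noncomputable def graphChord (A : ℝ → ℝ) (x y : ℝ) : ℂ :=
  ((x - y : ℝ) : ℂ) + Complex.I * ((A x - A y : ℝ) : ℂ)

lemma graphChord_re (A : ℝ → ℝ) (x y : ℝ) : (graphChord A x y).re = x - y := by
  simp [graphChord]

lemma graphChord_neg (A : ℝ → ℝ) (x y : ℝ) : graphChord A x y = -graphChord A y x := by
  simp only [graphChord]; push_cast; ring

lemma graphChord_ne_zero (A : ℝ → ℝ) {x y : ℝ} (h : x ≠ y) : graphChord A x y ≠ 0 := fun h0 => by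
  have := graphChord_re A x y
  rw [h0, Complex.zero_re] at this
  exact h (sub_eq_zero.1 this.symm)

lemma graphChord_mem_slitPlane (A : ℝ → ℝ) {x y : ℝ} (h : y < x) :
    graphChord A x y ∈ Complex.slitPlane :=
  Or.inl (by rw [graphChord_re]; linarith)

lemma cauchyKernel_eq_inv_graphChord (A : ℝ → ℝ) (x y : ℝ) :
    cauchyKernel A x y = (graphChord A x y)⁻¹ := by
  simp [cauchyKernel, graphChord]

lemma abs_sub_le_norm_graphChord (A : ℝ → ℝ) (x y : ℝ) : |x - y| ≤ ‖graphChord A x y‖ := by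
  rw [← graphChord_re A x y]; exact Complex.abs_re_le_norm _

lemma norm_graphChord_le {L : ℝ≥0} {A : ℝ → ℝ} (hA : LipschitzWith L A) (x y : ℝ) :
    ‖graphChord A x y‖ ≤ (1 + L) * |x - y| := by
  have h := hA.dist_le_mul x y
  rw [Real.dist_eq, Real.dist_eq] at h
  calc ‖graphChord A x y‖ ≤ ‖((x - y : ℝ) : ℂ)‖ + ‖Complex.I * ((A x - A y : ℝ) : ℂ)‖ :=
        norm_add_le _ _
    _ = |x - y| + |A x - A y| := by
        rw [norm_mul, Complex.norm_I, one_mul, Complex.norm_real, Complex.norm_real,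
          Real.norm_eq_abs, Real.norm_eq_abs]
    _ ≤ (1 + L) * |x - y| := by linarith

lemma norm_graphDensity_le {L : ℝ≥0} {A : ℝ → ℝ} (hA : LipschitzWith L A) (y : ℝ) :
    ‖graphDensity A y‖ ≤ 1 + L := by
  have h : ‖deriv A y‖ ≤ L := norm_deriv_le_of_lipschitz hA
  calc ‖graphDensity A y‖ ≤ ‖(1 : ℂ)‖ + ‖Complex.I * ((deriv A y : ℝ) : ℂ)‖ := norm_add_le _ _
    _ = 1 + ‖deriv A y‖ := by
        rw [norm_mul, Complex.norm_I, one_mul, Complex.norm_real, norm_one]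
    _ ≤ 1 + L := by linarith

lemma measurable_graphDensity (A : ℝ → ℝ) : Measurable (graphDensity A) :=
  measurable_const.add
    (measurable_const.mul (Complex.measurable_ofReal.comp (measurable_deriv A)))

lemma continuous_graphChord_left {A : ℝ → ℝ} (hA : Continuous A) (y : ℝ) :
    Continuous fun x => graphChord A x y := by
  unfold graphChord; fun_prop

lemma continuous_graphChord_right {A : ℝ → ℝ} (hA : Continuous A) (x : ℝ) :
    Continuous fun y => graphChord A x y := by
  unfold graphChord; fun_prop

lemma hasDerivAt_graphChord_left {A : ℝ → ℝ} (hA : Differentiable ℝ A) (x y : ℝ) :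
    HasDerivAt (fun t => graphChord A t y) (graphDensity A x) x := by
  have h1 : HasDerivAt (fun t : ℝ => ((t - y : ℝ) : ℂ)) ((1 : ℝ) : ℂ) x :=
    ((hasDerivAt_id x).sub_const y).ofReal_comp
  have h2 : HasDerivAt (fun t : ℝ => ((A t - A y : ℝ) : ℂ)) ((deriv A x : ℝ) : ℂ) x :=
    ((hA x).hasDerivAt.sub_const (A y)).ofReal_comp
  have h := h1.add (h2.const_mul Complex.I)
  rw [Complex.ofReal_one] at h
  exact h

lemma hasDerivAt_graphChord_right {A : ℝ → ℝ} (hA : Differentiable ℝ A) (x y : ℝ) :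
    HasDerivAt (fun t => graphChord A x t) (-graphDensity A y) y := by
  have h := (hasDerivAt_graphChord_left hA y x).neg
  refine h.congr_of_eventuallyEq (Eventually.of_forall fun t => ?_)
  exact graphChord_neg A x t

/-- The truncated integrals of `1_I b` converge absolutely. -/
lemma integrableOn_cauchyKernel_mul_graphDensity {L : ℝ≥0} {A : ℝ → ℝ} (hA : LipschitzWith L A)
    (α β x : ℝ) {ε : ℝ} (hε : 0 < ε) :
    IntegrableOn (fun y => cauchyKernel A x y * (Icc α β).indicator (graphDensity A) y)
      (Ioo (x - ε) (x + ε))ᶜ := by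
  have hbd : IntegrableOn ((Icc α β).indicator fun _ => ε⁻¹ * (1 + (L : ℝ)))
      (Ioo (x - ε) (x + ε))ᶜ := by
    refine Integrable.integrableOn ?_
    rw [integrable_indicator_iff measurableSet_Icc]
    exact integrableOn_const (by simp)
  refine Integrable.mono' hbd ?_ ?_
  · refine Measurable.aestronglyMeasurable ?_
    simp_rw [cauchyKernel_eq_inv_graphChord]
    exact ((continuous_graphChord_right hA.continuous x).measurable.inv).mul
      ((measurable_graphDensity A).indicator measurableSet_Icc)
  · refine (ae_restrict_iff' measurableSet_Ioo.compl).2 (Eventually.of_forall fun y hy => ?_)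
    by_cases hyI : y ∈ Icc α β
    · rw [indicator_of_mem hyI, indicator_of_mem hyI, norm_mul, cauchyKernel_eq_inv_graphChord,
        norm_inv]
      have hxy : ε ≤ |x - y| := by
        by_contra! hlt
        rw [abs_lt] at hlt
        exact hy ⟨by linarith, by linarith⟩
      gcongr
      · exact hxy.trans (abs_sub_le_norm_graphChord A x y)
      · exact norm_graphDensity_le hA y
    · simp [indicator_of_notMem hyI]

/-- The part of the truncated integral to the left of the singularity. -/
lemma setIntegral_cauchyKernel_left {A : ℝ → ℝ} (hd : Differentiable ℝ A)
    {α x c : ℝ} (hαc : α ≤ c) (hcx : c < x)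
    (hint : IntegrableOn (fun y => cauchyKernel A x y * graphDensity A y) (Icc α c)) :
    ∫ y in Icc α c, cauchyKernel A x y * graphDensity A y =
      Complex.log (graphChord A x α) - Complex.log (graphChord A x c) := by
  rw [integral_Icc_eq_integral_Ioc, ← intervalIntegral.integral_of_le hαc]
  rw [intervalIntegral.integral_eq_sub_of_hasDerivAt
    (f := fun y => -Complex.log (graphChord A x y)) ?_ ?_]
  · ring
  · intro y hy
    rw [uIcc_of_le hαc] at hy
    have h := ((hasDerivAt_graphChord_right hd x y).clog_real
      (graphChord_mem_slitPlane A (hy.2.trans_lt hcx))).neg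
    refine h.congr_deriv ?_
    rw [cauchyKernel_eq_inv_graphChord]; ring
  · rw [intervalIntegrable_iff_integrableOn_Icc_of_le hαc]; exact hint

/-- The part of the truncated integral to the right of the singularity. -/
lemma setIntegral_cauchyKernel_right {A : ℝ → ℝ} (hd : Differentiable ℝ A)
    {β x c : ℝ} (hcβ : c ≤ β) (hxc : x < c)
    (hint : IntegrableOn (fun y => cauchyKernel A x y * graphDensity A y) (Icc c β)) :
    ∫ y in Icc c β, cauchyKernel A x y * graphDensity A y =
      Complex.log (graphChord A c x) - Complex.log (graphChord A β x) := by
  rw [integral_Icc_eq_integral_Ioc, ← intervalIntegral.integral_of_le hcβ]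
  rw [intervalIntegral.integral_eq_sub_of_hasDerivAt
    (f := fun y => -Complex.log (graphChord A y x)) ?_ ?_]
  · ring
  · intro y hy
    rw [uIcc_of_le hcβ] at hy
    have h := ((hasDerivAt_graphChord_left hd y x).clog_real
      (graphChord_mem_slitPlane A (hxc.trans_le hy.1))).neg
    refine h.congr_deriv ?_
    rw [cauchyKernel_eq_inv_graphChord, graphChord_neg A x y, inv_neg]; ring
  · rw [intervalIntegrable_iff_integrableOn_Icc_of_le hcβ]; exact hint

lemma truncatedCauchy_indicator_graphDensity {L : ℝ≥0} {A : ℝ → ℝ} (hA : LipschitzWith L A)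
    (hd : Differentiable ℝ A) {α β x ε : ℝ} (hε : 0 < ε) (h1 : ε ≤ x - α) (h2 : ε ≤ β - x) :
    truncatedCauchy A ε ((Icc α β).indicator (graphDensity A)) x =
      Complex.log (graphChord A x α) - Complex.log (graphChord A β x) +
        (Complex.log (graphChord A (x + ε) x) - Complex.log (graphChord A x (x - ε))) := by
  have hset : (Ioo (x - ε) (x + ε))ᶜ ∩ Icc α β = Icc α (x - ε) ∪ Icc (x + ε) β := by
    ext y
    simp only [mem_inter_iff, mem_compl_iff, mem_Ioo, mem_Icc, mem_union, not_and_or, not_lt]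
    constructor
    · rintro ⟨h | h, h3, h4⟩
      · exact Or.inl ⟨h3, h⟩
      · exact Or.inr ⟨h, h4⟩
    · rintro (⟨h3, h4⟩ | ⟨h3, h4⟩)
      · exact ⟨Or.inl h4, h3, by linarith⟩
      · exact ⟨Or.inr h3, by linarith, h4⟩
  have hmul : (fun y => cauchyKernel A x y * (Icc α β).indicator (graphDensity A) y) =
      (Icc α β).indicator fun y => cauchyKernel A x y * graphDensity A y := by
    ext y
    by_cases hy : y ∈ Icc α β <;> simp [hy]
  have hint := integrableOn_cauchyKernel_mul_graphDensity hA α β x hε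
  rw [hmul, IntegrableOn, integrable_indicator_iff measurableSet_Icc, IntegrableOn,
    Measure.restrict_restrict measurableSet_Icc, inter_comm, hset] at hint
  have hl := IntegrableOn.mono_set hint subset_union_left
  have hr := IntegrableOn.mono_set hint subset_union_right
  rw [truncatedCauchy, hmul, setIntegral_indicator measurableSet_Icc, hset,
    setIntegral_union _ measurableSet_Icc hl hr,
    setIntegral_cauchyKernel_left hd (by linarith) (by linarith) hl,
    setIntegral_cauchyKernel_right hd (by linarith) (by linarith) hr]
  · ring
  · rw [Set.disjoint_left]
    rintro y ⟨_, h3⟩ ⟨h4, _⟩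
    linarith

lemma arg_mem_Ioo_of_re_pos {z : ℂ} (hz : 0 < z.re) : z.arg ∈ Ioo (-(Real.pi / 2)) (Real.pi / 2) :=
  abs_lt.1 (Complex.abs_arg_lt_pi_div_two_iff.2 (Or.inl hz))

/-- On the right half-plane the principal logarithm turns quotients into differences. -/
lemma log_div_of_re_pos {z w : ℂ} (hz : 0 < z.re) (hw : 0 < w.re) :
    Complex.log (z / w) = Complex.log z - Complex.log w := by
  have hz0 : z ≠ 0 := fun h => by simp [h] at hz
  have hw0 : w ≠ 0 := fun h => by simp [h] at hw
  have h1 := arg_mem_Ioo_of_re_pos hz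
  have h2 := arg_mem_Ioo_of_re_pos hw
  rw [← Complex.log_exp (x := Complex.log z - Complex.log w), Complex.exp_sub,
    Complex.exp_log hz0, Complex.exp_log hw0]
  · rw [Complex.sub_im, Complex.log_im, Complex.log_im]; linarith [h1.1, h2.2]
  · rw [Complex.sub_im, Complex.log_im, Complex.log_im]; linarith [h1.2, h2.1]

lemma tendsto_graphChord_div_right {A : ℝ → ℝ} (hd : Differentiable ℝ A) (x : ℝ) :
    Tendsto (fun ε : ℝ => (ε : ℂ)⁻¹ * graphChord A (x + ε) x) (𝓝[>] 0)
      (𝓝 (graphDensity A x)) := by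
  have h := (hasDerivAt_graphChord_left hd x x).tendsto_slope_zero_right
  refine h.congr fun ε => ?_
  have h0 : graphChord A x x = 0 := by simp [graphChord]
  rw [h0, sub_zero, Complex.real_smul, Complex.ofReal_inv]

lemma tendsto_graphChord_div_left {A : ℝ → ℝ} (hd : Differentiable ℝ A) (x : ℝ) :
    Tendsto (fun ε : ℝ => (ε : ℂ)⁻¹ * graphChord A x (x - ε)) (𝓝[>] 0)
      (𝓝 (graphDensity A x)) := by
  have h := (hasDerivAt_graphChord_left hd x x).tendsto_slope_zero_left
  have hneg : Tendsto (fun ε : ℝ => -ε) (𝓝[>] 0) (𝓝[<] 0) := by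
    simpa using tendsto_neg_nhdsGT (a := (0 : ℝ))
  refine (h.comp hneg).congr fun ε => ?_
  have h0 : graphChord A x x = 0 := by simp [graphChord]
  simp only [Function.comp_apply]
  rw [h0, sub_zero, Complex.real_smul, graphChord_neg A x (x - ε), ← sub_eq_add_neg]
  push_cast
  rw [inv_neg]; ring

/-- The boundary terms at the singularity cancel in the limit. -/
lemma tendsto_log_graphChord_sub {A : ℝ → ℝ} (hd : Differentiable ℝ A) (x : ℝ) :
    Tendsto (fun ε : ℝ => Complex.log (graphChord A (x + ε) x) -
      Complex.log (graphChord A x (x - ε))) (𝓝[>] 0) (𝓝 0) := by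
  have hre : (graphDensity A x).re = 1 := by simp [graphDensity]
  have hb : graphDensity A x ≠ 0 := fun h => by simp [h] at hre
  have hq := (tendsto_graphChord_div_right hd x).div (tendsto_graphChord_div_left hd x) hb
  rw [div_self hb] at hq
  have hlog := hq.clog Complex.one_mem_slitPlane
  rw [Complex.log_one] at hlog
  refine hlog.congr' ?_
  filter_upwards [self_mem_nhdsWithin] with ε hε
  have hε : 0 < ε := hε
  have hε' : (ε : ℂ)⁻¹ ≠ 0 := inv_ne_zero (Complex.ofReal_ne_zero.2 hε.ne')
  simp only [Pi.div_apply]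
  rw [mul_div_mul_left _ _ hε', log_div_of_re_pos]
  · rw [graphChord_re]; linarith
  · rw [graphChord_re]; linarith

lemma tendsto_truncatedCauchy {L : ℝ≥0} {A : ℝ → ℝ} (hA : LipschitzWith L A)
    (hd : Differentiable ℝ A) {α β x : ℝ} (hx : x ∈ Ioo α β) :
    Tendsto (fun ε => truncatedCauchy A ε ((Icc α β).indicator (graphDensity A)) x)
      (𝓝[>] 0) (𝓝 (Complex.log (graphChord A x α / graphChord A β x))) := by
  rw [log_div_of_re_pos (by rw [graphChord_re]; linarith [hx.1])
    (by rw [graphChord_re]; linarith [hx.2])]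
  have h := (tendsto_log_graphChord_sub hd x).const_add
    (Complex.log (graphChord A x α) - Complex.log (graphChord A β x))
  rw [add_zero] at h
  refine h.congr' ?_
  have hpos : 0 < min (x - α) (β - x) := lt_min (by linarith [hx.1]) (by linarith [hx.2])
  filter_upwards [Ioc_mem_nhdsGT hpos] with ε hε
  exact (truncatedCauchy_indicator_graphDensity hA hd hε.1 (hε.2.trans (min_le_left _ _))
    (hε.2.trans (min_le_right _ _))).symm

lemma cauchyIntegral_indicator_graphDensity {L : ℝ≥0} {A : ℝ → ℝ} (hA : LipschitzWith L A)
    (hd : Differentiable ℝ A) {α β x : ℝ} (hx : x ∈ Ioo α β) :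
    cauchyIntegral A ((Icc α β).indicator (graphDensity A)) x =
      Complex.log (graphChord A x α / graphChord A β x) :=
  (tendsto_truncatedCauchy hA hd hx).limUnder_eq

lemma sq_log_le_rpow {w : ℝ} (h0 : 0 < w) (h1 : w ≤ 1) :
    Real.log w ^ 2 ≤ 16 * w ^ (-(1 / 2) : ℝ) := by
  have h := Real.abs_log_mul_self_rpow_lt w (1 / 4) h0 h1 (by norm_num)
  have hp : 0 < w ^ (1 / 4 : ℝ) := Real.rpow_pos_of_pos h0 _
  have hsq : (Real.log w * w ^ (1 / 4 : ℝ)) ^ 2 ≤ 16 := by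
    rw [← sq_abs]
    nlinarith [abs_nonneg (Real.log w * w ^ (1 / 4 : ℝ))]
  have hw : (w ^ (1 / 4 : ℝ)) ^ 2 * w ^ (-(1 / 2) : ℝ) = 1 := by
    rw [← Real.rpow_natCast, ← Real.rpow_mul h0.le, ← Real.rpow_add h0]
    norm_num
  have hp2 : 0 < w ^ (-(1 / 2) : ℝ) := Real.rpow_pos_of_pos h0 _
  calc Real.log w ^ 2 = (Real.log w * w ^ (1 / 4 : ℝ)) ^ 2 * w ^ (-(1 / 2) : ℝ) := by
        rw [mul_pow, mul_assoc, hw, mul_one]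
    _ ≤ 16 * w ^ (-(1 / 2) : ℝ) := by gcongr

lemma abs_log_norm_graphChord_sub_le {L : ℝ≥0} {A : ℝ → ℝ} (hA : LipschitzWith L A)
    {x y ℓ : ℝ} (hxy : y < x) (hℓ : 0 < ℓ) :
    |Real.log (‖graphChord A x y‖) - Real.log ℓ - Real.log ((x - y) / ℓ)| ≤
      Real.log (1 + L) := by
  have hpos : 0 < x - y := by linarith
  have h1 := abs_sub_le_norm_graphChord A x y
  have h2 := norm_graphChord_le hA x y
  rw [abs_of_pos hpos] at h1 h2
  have hL : (0 : ℝ) < 1 + L := by positivity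
  have h3 := Real.log_le_log hpos h1
  have h4 := Real.log_le_log (hpos.trans_le h1) h2
  rw [Real.log_mul hL.ne' hpos.ne'] at h4
  rw [Real.log_div hpos.ne' hℓ.ne', abs_of_nonneg (by linarith)]
  linarith

/-- Pointwise bound for the principal value by an integrable function. -/
lemma norm_log_graphChord_div_sq_le {L : ℝ≥0} {A : ℝ → ℝ} (hA : LipschitzWith L A)
    {α β x : ℝ} (hx : x ∈ Ioo α β) :
    ‖Complex.log (graphChord A x α / graphChord A β x)‖ ^ 2 ≤
      48 * ((x - α) / (β - α)) ^ (-(1 / 2) : ℝ) + 48 * ((β - x) / (β - α)) ^ (-(1 / 2) : ℝ) +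
        3 * (2 * Real.log (1 + L) + Real.pi) ^ 2 := by
  have hα : 0 < x - α := by linarith [hx.1]
  have hβ : 0 < β - x := by linarith [hx.2]
  have hℓ : 0 < β - α := by linarith
  have hu := sq_log_le_rpow (div_pos hα hℓ) ((div_le_one hℓ).2 (by linarith))
  have hv := sq_log_le_rpow (div_pos hβ hℓ) ((div_le_one hℓ).2 (by linarith))
  have eu := abs_log_norm_graphChord_sub_le hA hx.1 hℓ
  have ev := abs_log_norm_graphChord_sub_le hA hx.2 hℓ
  have hnz := norm_pos_iff.2 (graphChord_ne_zero A hx.1.ne')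
  have hnw := norm_pos_iff.2 (graphChord_ne_zero A hx.2.ne')
  have hre : (Complex.log (graphChord A x α / graphChord A β x)).re =
      Real.log ‖graphChord A x α‖ - Real.log ‖graphChord A β x‖ := by
    rw [Complex.log_re, norm_div, Real.log_div hnz.ne' hnw.ne']
  have him : |(Complex.log (graphChord A x α / graphChord A β x)).im| ≤ Real.pi := by
    rw [Complex.log_im]; exact Complex.abs_arg_le_pi _
  have hn := Complex.norm_le_abs_re_add_abs_im (Complex.log (graphChord A x α / graphChord A β x))
  rw [hre] at hn
  set u := Real.log ((x - α) / (β - α))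
  set v := Real.log ((β - x) / (β - α))
  set p := Real.log ‖graphChord A x α‖
  set q := Real.log ‖graphChord A β x‖
  set l := Real.log (β - α)
  have hpq : |p - q| ≤ |u| + |v| + 2 * Real.log (1 + L) := by
    rw [show p - q = (u + (p - l - u)) - (v + (q - l - v)) by ring]
    linarith [abs_sub (u + (p - l - u)) (v + (q - l - v)), abs_add_le u (p - l - u),
      abs_add_le v (q - l - v)]
  have hle : ‖Complex.log (graphChord A x α / graphChord A β x)‖ ≤
      |u| + |v| + (2 * Real.log (1 + L) + Real.pi) := by linarith
  set c := 2 * Real.log (1 + L) + Real.pi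
  have hsq := pow_le_pow_left₀ (norm_nonneg _) hle 2
  have := sq_abs u
  have := sq_abs v
  nlinarith [sq_nonneg (|u| - |v|), sq_nonneg (|u| - c), sq_nonneg (|v| - c)]

lemma integrableOn_div_rpow_neg_half {α β : ℝ} (h : α < β) :
    IntegrableOn (fun x => ((x - α) / (β - α)) ^ (-(1 / 2) : ℝ)) (Ioc α β) ∧
      ∫ x in Ioc α β, ((x - α) / (β - α)) ^ (-(1 / 2) : ℝ) = 2 * (β - α) := by
  have hℓ : β - α ≠ 0 := by linarith
  have hi : IntervalIntegrable (fun w : ℝ => w ^ (-(1 / 2) : ℝ)) volume 0 1 :=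
    intervalIntegral.intervalIntegrable_rpow' (by norm_num)
  have hv : ∫ w in (0 : ℝ)..1, w ^ (-(1 / 2) : ℝ) = 2 := by
    rw [integral_rpow (Or.inl (by norm_num))]; norm_num
  constructor
  · rw [← intervalIntegrable_iff_integrableOn_Ioc_of_le h.le]
    have := (hi.comp_mul_left (c := (β - α)⁻¹)).comp_sub_right α
    simpa [hℓ, div_eq_inv_mul] using this
  · rw [← intervalIntegral.integral_of_le h.le,
      intervalIntegral.integral_comp_sub_right (fun x => (x / (β - α)) ^ (-(1 / 2) : ℝ)) α,
      intervalIntegral.integral_comp_div (fun x => x ^ (-(1 / 2) : ℝ)) hℓ, sub_self, zero_div,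
      div_self hℓ, hv, smul_eq_mul]
    ring

lemma integrableOn_div_rpow_neg_half_right {α β : ℝ} (h : α < β) :
    IntegrableOn (fun x => ((β - x) / (β - α)) ^ (-(1 / 2) : ℝ)) (Ioc α β) ∧
      ∫ x in Ioc α β, ((β - x) / (β - α)) ^ (-(1 / 2) : ℝ) = 2 * (β - α) := by
  obtain ⟨hi, hv⟩ := integrableOn_div_rpow_neg_half h
  have hrefl : ∀ x : ℝ, ((β - x) / (β - α)) ^ (-(1 / 2) : ℝ) =
      (fun t => ((t - α) / (β - α)) ^ (-(1 / 2) : ℝ)) (α + β - x) := fun x => by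
    simp only; congr 2; ring
  simp_rw [hrefl]
  rw [← intervalIntegrable_iff_integrableOn_Ioc_of_le h.le] at hi ⊢
  rw [← intervalIntegral.integral_of_le h.le] at hv ⊢
  constructor
  · have := (hi.comp_sub_left (α + β)).symm
    simpa using this
  · rw [intervalIntegral.integral_comp_sub_left
      (fun t => ((t - α) / (β - α)) ^ (-(1 / 2) : ℝ)) (α + β)]
    simpa using hv

lemma sq_norm_cauchyIntegral_testing {L : ℝ≥0} {A : ℝ → ℝ} (hA : LipschitzWith L A)
    (hd : Differentiable ℝ A) {α β : ℝ} (h : α < β) :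
    IntegrableOn (fun x => ‖cauchyIntegral A ((Icc α β).indicator (graphDensity A)) x‖ ^ 2)
        (Ioo α β) ∧
      ∫ x in Ioo α β, ‖cauchyIntegral A ((Icc α β).indicator (graphDensity A)) x‖ ^ 2 ≤
        (192 + 3 * (2 * Real.log (1 + L) + Real.pi) ^ 2) * (β - α) := by
  have heq : EqOn (fun x => ‖cauchyIntegral A ((Icc α β).indicator (graphDensity A)) x‖ ^ 2)
      (fun x => ‖Complex.log (graphChord A x α / graphChord A β x)‖ ^ 2) (Ioo α β) :=
    fun x hx => by simp only [cauchyIntegral_indicator_graphDensity hA hd hx]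
  rw [integrableOn_congr_fun heq measurableSet_Ioo, setIntegral_congr_fun measurableSet_Ioo heq]
  obtain ⟨hi, hv⟩ := integrableOn_div_rpow_neg_half h
  obtain ⟨hi', hv'⟩ := integrableOn_div_rpow_neg_half_right h
  have hc : IntegrableOn (fun _ : ℝ => 3 * (2 * Real.log (1 + L) + Real.pi) ^ 2) (Ioc α β) :=
    integrableOn_const (by simp)
  have hsum := ((hi.const_mul 48).add (hi'.const_mul 48))
  have hbd := hsum.add hc
  have hval := integral_add hsum hc
  simp only [Pi.add_apply] at hval
  rw [integral_add (hi.const_mul 48) (hi'.const_mul 48), integral_const_mul, integral_const_mul,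
    hv, hv', setIntegral_const, Real.volume_real_Ioc_of_le h.le, smul_eq_mul] at hval
  replace hbd := hbd.mono_measure (Measure.restrict_mono_set volume Ioo_subset_Ioc_self)
  have hf : IntegrableOn (fun x => ‖Complex.log (graphChord A x α / graphChord A β x)‖ ^ 2)
      (Ioo α β) := by
    refine Integrable.mono' hbd ?_ ?_
    · refine Measurable.aestronglyMeasurable ?_
      have hm := (continuous_graphChord_left hA.continuous α).measurable.div
        (continuous_graphChord_right hA.continuous β).measurable
      exact (Complex.measurable_log.comp hm).norm.pow_const 2
    · refine (ae_restrict_iff' measurableSet_Ioo).2 (Eventually.of_forall fun x hx => ?_)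
      rw [Real.norm_of_nonneg (by positivity)]
      exact norm_log_graphChord_div_sq_le hA hx
  refine ⟨hf, ?_⟩
  refine (setIntegral_mono_on hf hbd measurableSet_Ioo fun x hx =>
    norm_log_graphChord_div_sq_le hA hx).trans ?_
  rw [← integral_Ioc_eq_integral_Ioo]
  exact hval.le.trans_eq (by ring)

/-- **`b`-testing for the Cauchy integral along a Lipschitz graph.** For `A` Lipschitz and
differentiable, `b = 1 + i A'` and `I = [α, β]`: at every `x ∈ (α, β)` the truncated integrals of
`1_I b` converge absolutely, the principal value `C_A(1_I b)(x)` exists and is the stated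
principal logarithm, and `∫_α^β |C_A(1_I b)|² ≤ C (β - α)` (with `|C_A(1_I b)|²` integrable),
where `C` depends only on the Lipschitz constant. -/
theorem cauchyBTesting (L : ℝ≥0) :
    ∃ C : ℝ, ∀ A : ℝ → ℝ, LipschitzWith L A → Differentiable ℝ A →
      ∀ α β : ℝ, α ≤ β →
        (∀ x ∈ Ioo α β,
          (∀ ε : ℝ, 0 < ε →
            IntegrableOn
              (fun y => cauchyKernel A x y * (Icc α β).indicator (graphDensity A) y)
              (Ioo (x - ε) (x + ε))ᶜ) ∧
          Tendsto
            (fun ε => truncatedCauchy A ε ((Icc α β).indicator (graphDensity A)) x)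
            (𝓝[>] (0 : ℝ))
            (𝓝 (Complex.log
              ((((x - α : ℝ) : ℂ) + Complex.I * ((A x - A α : ℝ) : ℂ)) /
                (((β - x : ℝ) : ℂ) + Complex.I * ((A β - A x : ℝ) : ℂ)))))) ∧
        IntegrableOn
          (fun x => ‖cauchyIntegral A ((Icc α β).indicator (graphDensity A)) x‖ ^ 2)
          (Icc α β) ∧
        ∫ x in Icc α β, ‖cauchyIntegral A ((Icc α β).indicator (graphDensity A)) x‖ ^ 2
          ≤ C * (β - α) := by
  refine ⟨192 + 3 * (2 * Real.log (1 + L) + Real.pi) ^ 2, fun A hA hd α β hαβ => ⟨fun x hx =>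
    ⟨fun ε hε => integrableOn_cauchyKernel_mul_graphDensity hA α β x hε,
      tendsto_truncatedCauchy hA hd hx⟩, ?_⟩⟩
  rcases hαβ.eq_or_lt with rfl | h
  · simp
  · rw [integrableOn_Icc_iff_integrableOn_Ioo, integral_Icc_eq_integral_Ioo]
    exact sq_norm_cauchyIntegral_testing hA hd h
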